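/- arXiv:1905.09729 — 2 statements merged into one kernel-verified Lean document; each statement's English description precedes it below -/
import Mathlib

section
/- Let t, L be positive integers, let H be a graph on L vertices, and let G be an ordered graph containing the blow-up H(t·2^L) as a subgraph. Then there exists a total ordering of the vertices of H such that the consistently ordered blow-up H(t) is an ordered subgraph of G. -/
theorem exists_cut {V : Type} [LinearOrder V] (t : ℕ) (ht : 1 ≤ t) (A : Finset V) :
    t ≤ A.card → ∃ x, (A.filter (· ≤ x)).card = t := by
  induction A using Finset.induction_on_max with
  | empty => intro h; simp at h; omega
  | insert a s hs ih =>
    intro h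
    have ha : a ∉ s := fun h => lt_irrefl _ (hs a h)
    rw [Finset.card_insert_of_notMem ha] at h
    by_cases hc : t ≤ s.card
    · obtain ⟨x, hx⟩ := ih hc
      by_cases hax : a ≤ x
      · have hall : s.filter (· ≤ x) = s :=
          Finset.filter_true_of_mem (fun y hy => ((hs y hy).trans_le hax).le)
        rw [hall] at hx
        have hne : s.Nonempty := Finset.card_pos.mp (by omega)
        refine ⟨s.max' hne, ?_⟩
        rw [Finset.filter_insert, if_neg (not_le.mpr (hs _ (s.max'_mem hne))),
          Finset.filter_true_of_mem (fun y hy => s.le_max' y hy)]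
        exact hx
      · exact ⟨x, by rw [Finset.filter_insert, if_neg hax]; exact hx⟩
    · refine ⟨a, ?_⟩
      rw [Finset.filter_true_of_mem, Finset.card_insert_of_notMem ha]
      · omega
      · intro y hy
        rcases Finset.mem_insert.mp hy with rfl | hy
        · exact le_rfl
        · exact (hs y hy).le

theorem exists_parts {V ι : Type} [LinearOrder V] [DecidableEq ι] (t : ℕ) (ht : 1 ≤ t) (n : ℕ) :
    ∀ (S : Finset ι) (A : ι → Finset V), S.card = n → (∀ u ∈ S, t * n ≤ (A u).card) →
    ∃ (B : ι → Finset V) (σ : ι → ℕ), (∀ u ∈ S, B u ⊆ A u ∧ (B u).card = t ∧ σ u < n) ∧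
      Set.InjOn σ S ∧
      ∀ u ∈ S, ∀ v ∈ S, σ u < σ v → ∀ x ∈ B u, ∀ y ∈ B v, x < y := by
  induction n with
  | zero =>
    intro S A hS _
    rw [Finset.card_eq_zero] at hS
    subst hS
    exact ⟨A, fun _ => 0, by simp, by simp, by simp⟩
  | succ n ih =>
    intro S A hS hA
    have h1 : ∀ u, ∃ x, u ∈ S → ((A u).filter (· ≤ x)).card = t := by
      intro u
      by_cases hu : u ∈ S
      · obtain ⟨x, hx⟩ := exists_cut t ht (A u) (by have := hA u hu; nlinarith)
        exact ⟨x, fun _ => hx⟩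
      · have hne : S.Nonempty := Finset.card_pos.mp (by omega)
        obtain ⟨w, hw⟩ := hne
        obtain ⟨x, hx⟩ := exists_cut t ht (A w) (by have := hA w hw; nlinarith)
        exact ⟨x, fun h => absurd h hu⟩
    choose x hx using h1
    obtain ⟨u0, hu0, hmin⟩ := S.exists_min_image x (Finset.card_pos.mp (by omega))
    obtain ⟨B, σ, hB, hinj, hord⟩ := ih (S.erase u0) (fun v => (A v).filter (fun y => ¬ y ≤ x u0))
      (by rw [Finset.card_erase_of_mem hu0]; omega) (by
        intro v hv
        have hvS := Finset.mem_of_mem_erase hv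
        have e := Finset.card_filter_add_card_filter_not (s := A v) (· ≤ x u0)
        have l : ((A v).filter (· ≤ x u0)).card ≤ t := by
          rw [← hx v hvS]
          apply Finset.card_le_card
          intro y hy
          rw [Finset.mem_filter] at hy ⊢
          exact ⟨hy.1, hy.2.trans (hmin v hvS)⟩
        have := hA v hvS
        rw [mul_add] at this
        omega)
    refine ⟨fun v => if v = u0 then (A u0).filter (· ≤ x u0) else B v,
      fun v => if v = u0 then 0 else σ v + 1, ?_, ?_, ?_⟩
    · intro u hu
      by_cases h : u = u0
      · subst h
        simp only [if_true]
        exact ⟨Finset.filter_subset _ _, hx u hu, by omega⟩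
      · simp only [h, if_false]
        obtain ⟨a, b, c⟩ := hB u (Finset.mem_erase.mpr ⟨h, hu⟩)
        exact ⟨a.trans (Finset.filter_subset _ _), b, by omega⟩
    · intro u hu v hv huv
      by_cases h : u = u0 <;> by_cases h' : v = u0 <;> simp [h, h'] at huv ⊢
      exact hinj (by simpa [h] using hu) (by simpa [h'] using hv) huv
    · intro u hu v hv huv y hy z hz
      by_cases h' : v = u0
      · simp [h'] at huv
      have hv' := Finset.mem_erase.mpr ⟨h', hv⟩
      by_cases h : u = u0
      · simp only [h, h', if_true, if_false] at hy hz
        have h2 := (Finset.mem_filter.mp ((hB v hv').1 hz)).2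
        have h3 := (Finset.mem_filter.mp hy).2
        exact h3.trans_lt (not_le.mp h2)
      · simp only [h, h', if_false] at hy hz huv
        exact hord u (Finset.mem_erase.mpr ⟨h, hu⟩) v hv' (by omega) y hy z hz

/-- If `H` is a graph on `L` vertices and an ordered graph `G` (a graph on a linearly
ordered vertex set) contains the blow-up `H(t·2^L)`, then there is a total ordering
`σ` of the vertices of `H` such that the consistently ordered blow-up `H(t)` is an
ordered subgraph of `G`: a copy of `H(t)` in which vertices from the part of `u`
precede vertices from the part of `v` whenever `σ u < σ v`. -/
theorem stmt_5 (t L : ℕ) (ht : 1 ≤ t) (hL : 1 ≤ L)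
    (V : Type) [LinearOrder V] (G : SimpleGraph V) (H : SimpleGraph (Fin L))
    (f : Fin L × Fin (t * 2 ^ L) → V) (hf : Function.Injective f)
    (hadj : ∀ u v a b, H.Adj u v → G.Adj (f (u, a)) (f (v, b))) :
    ∃ σ : Fin L → Fin L, Function.Bijective σ ∧
      ∃ g : Fin L × Fin t → V, Function.Injective g ∧
        (∀ u v a b, H.Adj u v → G.Adj (g (u, a)) (g (v, b))) ∧
        (∀ u v a b, σ u < σ v → g (u, a) < g (v, b)) := by
  obtain ⟨B, σ, hB, hinj, hord⟩ := exists_parts t ht L (Finset.univ : Finset (Fin L))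
    (fun u => Finset.univ.image (fun a => f (u, a))) (by simp) (by
      intro u _
      rw [Finset.card_image_of_injective _ (fun a b h => by simpa using hf h)]
      simp only [Finset.card_univ, Fintype.card_fin]
      exact Nat.mul_le_mul_left t Nat.lt_two_pow_self.le)
  have hσ : Function.Injective (fun u => (⟨σ u, (hB u (Finset.mem_univ _)).2.2⟩ : Fin L)) := by
    intro u v h
    exact hinj (by simp) (by simp) (by simpa using h)
  have hm : ∀ u a, (B u).orderEmbOfFin (hB u (Finset.mem_univ _)).2.1 a ∈ B u :=
    fun u a => Finset.orderEmbOfFin_mem _ _ _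
  refine ⟨_, Finite.injective_iff_bijective.mp hσ,
    fun p => (B p.1).orderEmbOfFin (hB p.1 (Finset.mem_univ _)).2.1 p.2, ?_, ?_, ?_⟩
  · rintro ⟨u, a⟩ ⟨v, b⟩ h
    dsimp only at h
    rcases lt_trichotomy (σ u) (σ v) with h1 | h1 | h1
    · exact absurd h (hord u (by simp) v (by simp) h1 _ (hm u a) _ (hm v b)).ne
    · have : u = v := hinj (by simp) (by simp) h1
      subst this
      simpa using h
    · exact absurd h (hord v (by simp) u (by simp) h1 _ (hm v b) _ (hm u a)).ne'
  · intro u v a b huv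
    have h1 := (hB u (Finset.mem_univ _)).1 (hm u a)
    have h2 := (hB v (Finset.mem_univ _)).1 (hm v b)
    obtain ⟨a', _, ha⟩ := Finset.mem_image.mp h1
    obtain ⟨b', _, hb⟩ := Finset.mem_image.mp h2
    dsimp only
    rw [← ha, ← hb]
    exact hadj u v a' b' huv
  · intro u v a b huv
    exact hord u (by simp) v (by simp) huv _ (hm u a) _ (hm v b)
end

section
/- For every positive integer k and every ε > 0 there exists N = N(k, ε) such that every Hamiltonian graph G on n ≥ N vertices with minimum degree δ(G) ≥ εn contains a 2-factor consisting of exactly k vertex-disjoint cycles. -/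
theorem box (p : ℕ) : ∀ (t : ℕ) (c : ℝ), 0 < c → ∃ N : ℕ, ∀ (V : Type) [Fintype V] [DecidableEq V]
    (S : Finset (Fin p → V)), N ≤ Fintype.card V → c * (Fintype.card V : ℝ) ^ p ≤ S.card →
    ∃ X : Fin p → Finset V, (∀ i, (X i).card = t) ∧ ∀ x : Fin p → V, (∀ i, x i ∈ X i) → x ∈ S := by
  induction p with
  | zero =>
    intro t c hc
    refine ⟨0, fun V _ _ S _ hS => ⟨fun i => i.elim0, fun i => i.elim0, fun x _ => ?_⟩⟩
    have h1 : (0 : ℝ) < S.card := by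
      simp at hS; linarith
    have h2 : 0 < S.card := by exact_mod_cast h1
    obtain ⟨y, hy⟩ := Finset.card_pos.mp h2
    rwa [Subsingleton.elim x y]
  | succ p ih =>
    intro t c hc
    obtain ⟨m, hm⟩ := exists_nat_gt (4 * t / c)
    have hm0 : (0 : ℝ) < m := lt_of_le_of_lt (by positivity) hm
    rw [div_lt_iff₀ hc] at hm
    obtain ⟨N', hN'⟩ := ih t (c / 4 / 2 ^ m) (by positivity)
    obtain ⟨N2, hN2⟩ := exists_nat_gt (2 * m / c)
    rw [div_lt_iff₀ hc] at hN2
    refine ⟨max N' (max N2 1), fun V _ _ S hN hS => ?_⟩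
    set n := Fintype.card V with hn
    have hN1 : N' ≤ n := le_trans (le_max_left _ _) hN
    have hN3 : N2 ≤ n := le_trans (le_trans (le_max_left _ _) (le_max_right _ _)) hN
    have hN4 : 1 ≤ n := le_trans (le_trans (le_max_right _ _) (le_max_right _ _)) hN
    have hN3' : (N2 : ℝ) ≤ n := by exact_mod_cast hN3
    have hn0 : (0 : ℝ) < n := by exact_mod_cast hN4
    have hP : (0 : ℝ) < (n : ℝ) ^ p := by positivity
    let Sv : V → Finset (Fin p → V) := fun v => Finset.univ.filter (fun w => (Fin.cons v w : Fin (p + 1) → V) ∈ S)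
    have hSvle : ∀ v, ((Sv v).card : ℝ) ≤ (n : ℝ) ^ p := by
      intro v
      have : (Sv v).card ≤ n ^ p := by
        refine (Finset.card_le_univ _).trans ?_
        simp [hn]
      exact_mod_cast this
    have hsum : (S.card : ℝ) = ∑ v, ((Sv v).card : ℝ) := by
      have h : S.card = ∑ v, (Sv v).card := by
        rw [Finset.card_eq_sum_card_fiberwise (f := fun x : Fin (p+1) → V => x 0) (t := Finset.univ) (by simp)]
        refine Finset.sum_congr rfl fun v _ => ?_
        symm
        refine Finset.card_bij (fun w _ => (Fin.cons v w : Fin (p + 1) → V)) ?_ ?_ ?_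
        · intro w hw
          simp [Sv] at hw ⊢
          exact hw
        · intro a _ b _ h
          exact (Fin.cons_injective2 h).2
        · intro x hx
          simp only [Finset.mem_filter] at hx
          refine ⟨Fin.tail x, ?_, ?_⟩
          · simp only [Sv, Finset.mem_filter, Finset.mem_univ, true_and]
            rw [← hx.2, Fin.cons_self_tail]; exact hx.1
          · rw [← hx.2, Fin.cons_self_tail]
      rw [h]; push_cast; rfl
    let A : Finset V := Finset.univ.filter (fun v => c / 2 * (n : ℝ) ^ p ≤ (Sv v).card)
    have hA : m ≤ A.card := by
      have h1 : ∑ v, ((Sv v).card : ℝ) ≤ ∑ v : V, ((if v ∈ A then (n : ℝ) ^ p else 0) + c / 2 * (n : ℝ) ^ p) := by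
        refine Finset.sum_le_sum fun v _ => ?_
        split_ifs with h
        · have := hSvle v
          have : 0 < c / 2 * (n : ℝ) ^ p := by positivity
          linarith [hSvle v]
        · simp only [A, Finset.mem_filter, Finset.mem_univ, true_and, not_le] at h
          linarith
      rw [Finset.sum_add_distrib, ← hsum] at h1
      simp only [Finset.sum_ite_mem, Finset.univ_inter, Finset.sum_const, nsmul_eq_mul, Finset.card_univ, ← hn] at h1
      have h2 : c * (n : ℝ) ^ p * n ≤ A.card * (n : ℝ) ^ p + n * (c / 2 * (n : ℝ) ^ p) := by
        refine le_trans (le_of_eq ?_) (hS.trans h1)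
        ring
      have h3 : (c / 2 * n) * (n : ℝ) ^ p ≤ A.card * (n : ℝ) ^ p := by nlinarith
      have h4 := le_of_mul_le_mul_right h3 hP
      have h5 : (m : ℝ) ≤ A.card := by nlinarith
      exact_mod_cast h5
    obtain ⟨V0, hV0A, hV0⟩ := Finset.exists_subset_card_eq hA
    let dp : (Fin p → V) → Finset V := fun w => V0.filter (fun v => (Fin.cons v w : Fin (p + 1) → V) ∈ S)
    have hdp : ∑ w, ((dp w).card : ℝ) = ∑ v ∈ V0, ((Sv v).card : ℝ) := by
      have := Finset.sum_card_bipartiteAbove_eq_sum_card_bipartiteBelow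
        (s := (Finset.univ : Finset (Fin p → V))) (t := V0) (fun w v => (Fin.cons v w : Fin (p + 1) → V) ∈ S)
      exact_mod_cast this
    have hlow : m * (c / 2 * (n : ℝ) ^ p) ≤ ∑ w, ((dp w).card : ℝ) := by
      rw [hdp, ← hV0, ← nsmul_eq_mul]
      refine Finset.card_nsmul_le_sum _ _ _ fun v hv => ?_
      have := hV0A hv
      simpa [A] using this
    let W : Finset (Fin p → V) := Finset.univ.filter (fun w => t ≤ (dp w).card)
    have hW : c / 4 * (n : ℝ) ^ p ≤ W.card := by
      have h1 : ∑ w, ((dp w).card : ℝ) ≤ ∑ w : Fin p → V, ((if w ∈ W then (m : ℝ) else 0) + t) := by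
        refine Finset.sum_le_sum fun w _ => ?_
        split_ifs with h
        · have : (dp w).card ≤ m := hV0 ▸ Finset.card_filter_le _ _
          have : ((dp w).card : ℝ) ≤ m := by exact_mod_cast this
          have : (0 : ℝ) ≤ t := by positivity
          linarith
        · simp only [W, Finset.mem_filter, Finset.mem_univ, true_and, not_le] at h
          have : ((dp w).card : ℝ) ≤ t := by exact_mod_cast h.le
          linarith
      rw [Finset.sum_add_distrib] at h1
      simp only [Finset.sum_ite_mem, Finset.univ_inter, Finset.sum_const, nsmul_eq_mul, Finset.card_univ,
        Fintype.card_fun, Fintype.card_fin, ← hn, Nat.cast_pow] at h1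
      have h2 := hlow.trans h1
      have h3 : m * (c / 4 * (n : ℝ) ^ p) ≤ m * W.card := by nlinarith
      exact le_of_mul_le_mul_left h3 hm0
    have hT : ∀ w ∈ W, ∃ T ∈ V0.powerset, T.card = t ∧ T ⊆ dp w := by
      intro w hw
      simp only [W, Finset.mem_filter, Finset.mem_univ, true_and] at hw
      obtain ⟨T, hT, hTc⟩ := Finset.exists_subset_card_eq hw
      exact ⟨T, Finset.mem_powerset.2 (hT.trans (Finset.filter_subset _ _)), hTc, hT⟩
    choose! T hT1 hT2 hT3 using hT
    have hpig : ∃ T0 ∈ V0.powerset, c / 4 / 2 ^ m * (n : ℝ) ^ p ≤ ((W.filter (fun w => T w = T0)).card : ℝ) := by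
      have := Finset.exists_le_card_fiber_of_nsmul_le_card_of_maps_to (s := W) (t := V0.powerset) (f := T)
        (b := c / 4 / 2 ^ m * (n : ℝ) ^ p) hT1 ⟨∅, by simp⟩ ?_
      · exact this
      · rw [Finset.card_powerset, hV0, nsmul_eq_mul]
        push_cast
        refine le_trans (le_of_eq ?_) hW
        field_simp
    obtain ⟨T0, -, hT0⟩ := hpig
    have hT0ne : (W.filter (fun w => T w = T0)).Nonempty := by
      rw [← Finset.card_pos]
      have : (0 : ℝ) < c / 4 / 2 ^ m * (n : ℝ) ^ p := by positivity
      exact_mod_cast this.trans_le hT0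
    have hT0c : T0.card = t := by
      obtain ⟨w, hw⟩ := hT0ne
      rw [Finset.mem_filter] at hw
      rw [← hw.2]; exact hT2 w hw.1
    obtain ⟨X, hX1, hX2⟩ := hN' V (W.filter (fun w => T w = T0)) hN1 hT0
    refine ⟨Fin.cons T0 X, ?_, ?_⟩
    · intro i
      refine Fin.cases ?_ ?_ i
      · simpa using hT0c
      · intro i; simpa using hX1 i
    · intro x hx
      have h0 := hx 0
      have h1 := hX2 (Fin.tail x) (fun i => by simpa [Fin.tail] using hx i.succ)
      rw [Finset.mem_filter] at h1
      have h2 := hT3 _ h1.1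
      rw [h1.2] at h2
      have h3 := h2 (show x 0 ∈ T0 by simpa using h0)
      simp only [dp, Finset.mem_filter, Fin.cons_self_tail] at h3
      exact h3.2

theorem merge_same {V : Type} [Fintype V] [DecidableEq V] (σ : Equiv.Perm V) (y z : V)
    (h : ¬ σ.SameCycle y z) : (σ * Equiv.swap y z).SameCycle z y := by
  set σ' := σ * Equiv.swap y z with hσ'
  by_contra hc
  have key : ∀ i : ℕ, σ'.SameCycle z ((σ ^ (i + 1)) y) := by
    intro i
    induction i with
    | zero =>
      have : (σ ^ (0 + 1)) y = σ' z := by simp [hσ']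
      rw [this]
      exact Equiv.Perm.sameCycle_apply_right.2 (Equiv.Perm.SameCycle.refl _ _)
    | succ i ih =>
      set u := (σ ^ (i + 1)) y with hu
      have huz : u ≠ z := by
        intro e
        apply h
        exact ⟨(i + 1 : ℕ), by rw [zpow_natCast, ← hu, e]⟩
      have huy : u ≠ y := by
        intro e
        rw [e] at ih
        exact hc ih
      have : (σ ^ (i + 1 + 1)) y = σ' u := by
        rw [hσ', Equiv.Perm.mul_apply, Equiv.swap_apply_of_ne_of_ne huy huz, hu, pow_succ' σ (i + 1),
          Equiv.Perm.mul_apply]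
      rw [this]
      exact Equiv.Perm.sameCycle_apply_right.2 ih
  have h1 := key (orderOf σ - 1)
  rw [Nat.sub_add_cancel (orderOf_pos σ), pow_orderOf_eq_one] at h1
  exact hc h1

theorem sameCycle_of_step {V : Type} [Fintype V] (σ τ : Equiv.Perm V) (h : ∀ u, τ.SameCycle u (σ u)) {u v : V}
    (huv : σ.SameCycle u v) : τ.SameCycle u v := by
  obtain ⟨i, -, hi⟩ := huv.exists_pow_eq'
  rw [← hi]
  clear hi
  induction i with
  | zero => exact Equiv.Perm.SameCycle.refl _ _
  | succ i ih =>
    rw [pow_succ', Equiv.Perm.mul_apply]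
    exact ih.trans (h _)

theorem merge_count {V : Type} [Fintype V] [DecidableEq V] (σ : Equiv.Perm V) (y z : V)
    (h : ¬ σ.SameCycle y z) :
    Nat.card (Quotient (Equiv.Perm.SameCycle.setoid σ)) =
      Nat.card (Quotient (Equiv.Perm.SameCycle.setoid (σ * Equiv.swap y z))) + 1 := by
  classical
  set σ' := σ * Equiv.swap y z with hσ'
  have hzy : σ'.SameCycle z y := merge_same σ y z h
  have hz : σ' z = σ y := by simp [hσ']
  have hy : σ' y = σ z := by simp [hσ']
  have ho : ∀ u, u ≠ y → u ≠ z → σ' u = σ u := by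
    intro u h1 h2
    rw [hσ', Equiv.Perm.mul_apply, Equiv.swap_apply_of_ne_of_ne h1 h2]
  have hA : ∀ u v, σ.SameCycle u v → σ'.SameCycle u v := by
    intro u v huv
    refine sameCycle_of_step σ σ' ?_ huv
    intro u
    by_cases h1 : u = y
    · rw [h1, ← hz]
      exact Equiv.Perm.sameCycle_apply_right.2 hzy.symm
    by_cases h2 : u = z
    · rw [h2, ← hy]
      exact Equiv.Perm.sameCycle_apply_right.2 hzy
    rw [← ho u h1 h2]
    exact Equiv.Perm.sameCycle_apply_right.2 (Equiv.Perm.SameCycle.refl _ _)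
  have hC : ∀ u v, σ'.SameCycle u v → σ.SameCycle u v ∨
      ((σ.SameCycle y u ∨ σ.SameCycle z u) ∧ (σ.SameCycle y v ∨ σ.SameCycle z v)) := by
    intro u v huv
    obtain ⟨i, -, hi⟩ := huv.exists_pow_eq'
    rw [← hi]
    clear hi
    induction i with
    | zero => exact Or.inl (Equiv.Perm.SameCycle.refl _ _)
    | succ i ih =>
      rw [pow_succ', Equiv.Perm.mul_apply]
      set w := (σ' ^ i) u
      by_cases h1 : w = y
      · rw [h1] at ih ⊢
        rw [hy]
        have e : σ.SameCycle z (σ z) := Equiv.Perm.sameCycle_apply_right.2 (Equiv.Perm.SameCycle.refl _ _)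
        right
        rcases ih with ih | ih
        · exact ⟨Or.inl ih.symm, Or.inr e⟩
        · exact ⟨ih.1, Or.inr e⟩
      by_cases h2 : w = z
      · rw [h2] at ih ⊢
        rw [hz]
        have e : σ.SameCycle y (σ y) := Equiv.Perm.sameCycle_apply_right.2 (Equiv.Perm.SameCycle.refl _ _)
        right
        rcases ih with ih | ih
        · exact ⟨Or.inr ih.symm, Or.inl e⟩
        · exact ⟨ih.1, Or.inl e⟩
      rw [ho w h1 h2]
      simpa only [Equiv.Perm.sameCycle_apply_right] using ih
  let Q := Quotient (Equiv.Perm.SameCycle.setoid σ)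
  let Q' := Quotient (Equiv.Perm.SameCycle.setoid σ')
  let φ : Q → Q' := Quotient.map' (s₁ := Equiv.Perm.SameCycle.setoid σ) (s₂ := Equiv.Perm.SameCycle.setoid σ') id
    (fun u v huv => hA u v huv)
  let q0 : Q := Quotient.mk (Equiv.Perm.SameCycle.setoid σ) z
  have hbij : Function.Bijective (fun q : {q : Q // q ≠ q0} => φ q.1) := by
    constructor
    · rintro ⟨a, ha⟩ ⟨b, hb⟩ hab
      induction a using Quotient.inductionOn with | _ a
      induction b using Quotient.inductionOn with | _ b
      have h1 : σ'.SameCycle a b := Quotient.exact hab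
      have ha' : ¬ σ.SameCycle z a := fun e => ha (Quotient.sound e.symm)
      have hb' : ¬ σ.SameCycle z b := fun e => hb (Quotient.sound e.symm)
      have : σ.SameCycle a b := by
        rcases hC a b h1 with h2 | ⟨h2, h3⟩
        · exact h2
        · exact (h2.resolve_right ha').symm.trans (h3.resolve_right hb')
      exact Subtype.ext (Quotient.sound this)
    · intro q
      induction q using Quotient.inductionOn with | _ a
      by_cases ha : σ.SameCycle z a
      · refine ⟨⟨Quotient.mk (Equiv.Perm.SameCycle.setoid σ) y, fun e => h (Quotient.exact e)⟩, ?_⟩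
        exact Quotient.sound (hzy.symm.trans (hA _ _ ha))
      · exact ⟨⟨Quotient.mk (Equiv.Perm.SameCycle.setoid σ) a, fun e => ha (Quotient.exact e).symm⟩, rfl⟩
  have h1 : Nat.card {q : Q // q ≠ q0} = Nat.card Q' := Nat.card_eq_of_bijective _ hbij
  have h2 : Nat.card Q = Nat.card {q : Q // q ≠ q0} + 1 := by
    have : Fintype Q := Fintype.ofFinite _
    rw [Nat.card_eq_fintype_card, Nat.card_eq_fintype_card, Fintype.card_subtype_compl, Fintype.card_subtype_eq]
    have : 0 < Fintype.card Q := Fintype.card_pos_iff.2 ⟨q0⟩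
    omega
  show Nat.card Q = Nat.card Q' + 1
  omega

theorem factor_of_perm {V : Type} [Fintype V] [DecidableEq V] (G : SimpleGraph V) (σ : Equiv.Perm V)
    (hG : ∀ v, G.Adj v (σ v)) (h2 : ∀ v, σ (σ v) ≠ v) :
    ∃ F : SimpleGraph V, F ≤ G ∧ (∀ v : V, {u | F.Adj v u}.ncard = 2) ∧
        Nat.card F.ConnectedComponent = Nat.card (Quotient (Equiv.Perm.SameCycle.setoid σ)) := by
  let F : SimpleGraph V :=
    { Adj := fun u v => σ u = v ∨ σ v = u
      symm := ⟨fun u v h => h.symm⟩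
      loopless := ⟨fun v h => (hG v).ne (by rcases h with h | h <;> exact h.symm)⟩ }
  refine ⟨F, ?_, ?_, ?_⟩
  · rintro u v (h | h)
    · rw [← h]; exact hG u
    · rw [← h]; exact (hG v).symm
  · intro v
    have : {u | F.Adj v u} = {σ v, σ.symm v} := by
      ext u
      simp only [F, Set.mem_ofPred_eq, Set.mem_insert_iff, Set.mem_singleton_iff, Equiv.eq_symm_apply]
      constructor
      · rintro (h | h)
        · exact Or.inl h.symm
        · exact Or.inr h
      · rintro (h | h)
        · exact Or.inl h.symm
        · exact Or.inr h
    rw [this, Set.ncard_pair]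
    intro h
    rw [Equiv.eq_symm_apply] at h
    exact h2 v h
  · have key : ∀ u v, F.Reachable u v ↔ σ.SameCycle u v := by
      intro u v
      constructor
      · rintro ⟨p⟩
        induction p with
        | nil => exact Equiv.Perm.SameCycle.refl _ _
        | cons h p ih =>
          refine Equiv.Perm.SameCycle.trans ?_ ih
          rcases h with h | h
          · rw [← h]; exact Equiv.Perm.sameCycle_apply_right.2 (Equiv.Perm.SameCycle.refl _ _)
          · rw [← h]; exact Equiv.Perm.sameCycle_apply_left.2 (Equiv.Perm.SameCycle.refl _ _)
      · intro huv
        obtain ⟨i, -, hi⟩ := huv.exists_pow_eq'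
        rw [← hi]
        clear hi
        induction i with
        | zero => simp
        | succ i ih =>
          rw [pow_succ', Equiv.Perm.mul_apply]
          exact ih.trans (SimpleGraph.Adj.reachable (Or.inl rfl))
    exact Nat.card_congr (Quotient.congrRight (r := F.reachableSetoid) (r' := Equiv.Perm.SameCycle.setoid σ) key)

theorem ham_perm {V : Type} [Fintype V] [DecidableEq V] (G : SimpleGraph V) (hcard : 2 ≤ Fintype.card V)
    (hH : G.IsHamiltonian) : ∃ (c : Equiv.Perm V) (pos : V → ℕ), Function.Injective pos ∧
      (∀ v w, pos v < pos w → pos (c v) = pos v + 1) ∧ (∀ u v, c.SameCycle u v) ∧ ∀ v, G.Adj v (c v) := by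
  obtain ⟨a, p, hp⟩ := hH (by omega)
  have hq := hp.isHamiltonian_tail
  have hnil := hp.isCycle.not_nil
  set q := p.tail with hqdef
  obtain ⟨m, hm⟩ : ∃ m, p.length = m + 2 := ⟨p.length - 2, by rw [hp.length_eq]; omega⟩
  have hql : q.length = m + 1 := by
    have := SimpleGraph.Walk.length_tail_add_one hnil
    rw [← hqdef] at this
    omega
  have hlen : q.support.length = m + 2 := by
    rw [SimpleGraph.Walk.length_support, hql]
  let e : Fin (m + 2) ≃ V := (finCongr hlen.symm).trans hq.getVertEquiv
  have he : ∀ i, e i = q.getVert i.val := fun i => rfl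
  refine ⟨e.permCongr (finRotate (m + 2)), fun v => (e.symm v).val, ?_, ?_, ?_, ?_⟩
  · intro u v h
    exact e.symm.injective (Fin.ext h)
  · intro v w h
    simp only [Equiv.permCongr_apply, Equiv.symm_apply_apply]
    rw [coe_finRotate_of_ne_last]
    intro h2
    simp only [h2] at h
    have := (e.symm w).isLt
    simp at h
    omega
  · intro u v
    have : (finRotate (m + 2)).SameCycle (e.symm u) (e.symm v) := by
      refine isCycle_finRotate.sameCycle ?_ ?_ <;>
      · rw [← Equiv.Perm.mem_support, support_finRotate]; simp
    obtain ⟨i, -, hi⟩ := this.exists_pow_eq'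
    refine ⟨i, ?_⟩
    have hpow : ∀ i : ℕ, ∀ w, ((e.permCongr (finRotate (m + 2))) ^ i) w = e (((finRotate (m + 2)) ^ i) (e.symm w)) := by
      intro i
      induction i with
      | zero => simp
      | succ i ih => intro w; simp [pow_succ', ih]
    rw [zpow_natCast, hpow, hi, Equiv.apply_symm_apply]
  · intro v
    obtain ⟨i, rfl⟩ := e.surjective v
    simp only [Equiv.permCongr_apply, Equiv.symm_apply_apply]
    rw [he, he]
    by_cases hi : i = Fin.last (m + 1)
    · subst hi
      rw [finRotate_last]
      have h1 : q.getVert (Fin.last (m + 1)).val = a := by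
        rw [Fin.val_last, ← hql, SimpleGraph.Walk.getVert_length]
      rw [h1]
      simp only [Fin.val_zero, SimpleGraph.Walk.getVert_zero]
      exact p.adj_snd hnil
    · rw [coe_finRotate_of_ne_last hi]
      apply SimpleGraph.Walk.adj_getVert_succ
      have := Fin.val_lt_last hi
      omega

/-- `σ` is the rotation `c` composed with a permutation `f` of the chosen points
that sends block `a` to block `a + 1`. -/
def GoodPerm {V : Type} {p s : ℕ} (c : Equiv.Perm V) (x : ZMod p × Fin s → V)
    (σ : Equiv.Perm V) (f : Equiv.Perm (ZMod p × Fin s)) : Prop :=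
  (∀ q, (f q).1 = q.1 + 1) ∧ (∀ q, σ (x q) = c (x (f q))) ∧ ∀ v, v ∉ Set.range x → σ v = c v

theorem good_swap {V : Type} [Fintype V] [DecidableEq V] {p s : ℕ} (c : Equiv.Perm V)
    (x : ZMod p × Fin s → V) (hx : Function.Injective x)
    (σ : Equiv.Perm V) (f : Equiv.Perm (ZMod p × Fin s)) (h : GoodPerm c x σ f) (a : ZMod p) (i j : Fin s) :
    ∃ f', GoodPerm c x (σ * Equiv.swap (x (a, i)) (x (a, j))) f' := by
  classical
  refine ⟨f * Equiv.swap (a, i) (a, j), ?_, ?_, ?_⟩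
  · intro q
    rw [Equiv.Perm.mul_apply, h.1]
    rcases eq_or_ne q (a, i) with rfl | h1
    · simp
    rcases eq_or_ne q (a, j) with rfl | h2
    · simp
    rw [Equiv.swap_apply_of_ne_of_ne h1 h2]
  · intro q
    rw [Equiv.Perm.mul_apply, Equiv.Perm.mul_apply, ← h.2.1]
    congr 1
    rcases eq_or_ne q (a, i) with rfl | h1
    · simp
    rcases eq_or_ne q (a, j) with rfl | h2
    · simp
    rw [Equiv.swap_apply_of_ne_of_ne h1 h2, Equiv.swap_apply_of_ne_of_ne (hx.ne h1) (hx.ne h2)]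
  · intro v hv
    rw [Equiv.Perm.mul_apply, Equiv.swap_apply_of_ne_of_ne, h.2.2 v hv]
    · rintro rfl; exact hv ⟨_, rfl⟩
    · rintro rfl; exact hv ⟨_, rfl⟩

theorem good_exists_merge {V : Type} [Fintype V] [DecidableEq V] {p k : ℕ} [NeZero p] (hk : 1 ≤ k)
    (c : Equiv.Perm V) (pos : V → ℕ) (hpos : Function.Injective pos)
    (hc1 : ∀ v w, pos v < pos w → pos (c v) = pos v + 1) (hc2 : ∀ u v, c.SameCycle u v)
    (x : ZMod p × Fin (k + 1) → V)
    (hnext : ∀ a (j : Fin k), pos (x (a, j.castSucc)) < pos (x (a, j.succ)) ∧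
      ∀ q, pos (x q) ≤ pos (x (a, j.castSucc)) ∨ pos (x (a, j.succ)) ≤ pos (x q))
    (σ : Equiv.Perm V) (f : Equiv.Perm (ZMod p × Fin (k + 1))) (h : GoodPerm c x σ f)
    (hcount : 2 ≤ Nat.card (Quotient (Equiv.Perm.SameCycle.setoid σ))) :
    ∃ a i j, ¬ σ.SameCycle (x (a, i)) (x (a, j)) := by
  by_contra! hall
  -- walking along the cycle up to the next chosen point
  have walk : ∀ a (j : Fin k), ∀ d v, pos (x (a, j.castSucc)) < pos v → pos v + d = pos (x (a, j.succ)) →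
      σ.SameCycle v (x (a, j.succ)) := by
    intro a j d
    induction d with
    | zero =>
      intro v _ h2
      rw [hpos (show pos v = pos (x (a, j.succ)) by omega)]
    | succ d ih =>
      intro v h1 h2
      have h3 : pos (c v) = pos v + 1 := hc1 v (x (a, j.succ)) (by omega)
      have h4 : v ∉ Set.range x := by
        rintro ⟨q, rfl⟩
        rcases (hnext a j).2 q with h5 | h5 <;> omega
      have h5 := ih (c v) (by omega) (by omega)
      rw [← h.2.2 v h4] at h5
      exact Equiv.Perm.sameCycle_apply_left.1 h5
  let j0 : Fin k := ⟨0, hk⟩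
  have step : ∀ a i j, σ.SameCycle (x (a, i)) (x (a + 1, j)) := by
    intro a i j
    obtain ⟨⟨b, i'⟩, hb⟩ := f.surjective (a + 1, j0.castSucc)
    have hba : b = a := by
      have := h.1 (b, i')
      rw [hb] at this
      exact (add_right_cancel this).symm
    subst hba
    have h1 : σ.SameCycle (c (x (b + 1, j0.castSucc))) (x (b + 1, j0.succ)) := by
      have h2 := (hnext (b + 1) j0).1
      have h3 := hc1 _ _ h2
      exact walk (b + 1) j0 (pos (x (b + 1, j0.succ)) - pos (c (x (b + 1, j0.castSucc)))) _ (by omega) (by omega)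
    rw [← hb, ← h.2.1] at h1
    exact ((hall b i i').trans (Equiv.Perm.sameCycle_apply_left.1 h1)).trans (hall _ _ _)
  have hblocks : ∀ m : ℕ, ∀ j, σ.SameCycle (x (0, 0)) (x ((m : ZMod p), j)) := by
    intro m
    induction m with
    | zero => intro j; rw [Nat.cast_zero]; exact hall _ _ _
    | succ m ih => intro j; rw [Nat.cast_succ]; exact (ih 0).trans (step _ _ _)
  have hX : ∀ q, σ.SameCycle (x (0, 0)) (x q) := by
    rintro ⟨a, j⟩
    have := hblocks a.val j
    rwa [ZMod.natCast_zmod_val] at this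
  have hV : ∀ v, σ.SameCycle (x (0, 0)) v := by
    intro v
    by_contra hv
    have : ∀ m : ℕ, σ.SameCycle v ((c ^ m) v) := by
      intro m
      induction m with
      | zero => exact Equiv.Perm.SameCycle.refl _ _
      | succ m ih =>
        have h4 : (c ^ m) v ∉ Set.range x := by
          rintro ⟨q, hq⟩
          rw [← hq] at ih
          exact hv ((hX q).trans ih.symm)
        rw [pow_succ', Equiv.Perm.mul_apply, ← h.2.2 _ h4]
        exact Equiv.Perm.sameCycle_apply_right.2 ih
    obtain ⟨m, -, hm⟩ := (hc2 v (x (0, 0))).exists_pow_eq'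
    have h5 := this m
    rw [hm] at h5
    exact hv h5.symm
  have : Subsingleton (Quotient (Equiv.Perm.SameCycle.setoid σ)) := by
    constructor
    intro a b
    induction a using Quotient.inductionOn with | _ a
    induction b using Quotient.inductionOn with | _ b
    exact Quotient.sound ((hV a).symm.trans (hV b))
  have := Finite.card_le_one_iff_subsingleton.2 this
  omega

theorem good_descend {V : Type} [Fintype V] [DecidableEq V] {p k : ℕ} [NeZero p] (hk : 1 ≤ k)
    (c : Equiv.Perm V) (pos : V → ℕ) (hpos : Function.Injective pos)
    (hc1 : ∀ v w, pos v < pos w → pos (c v) = pos v + 1) (hc2 : ∀ u v, c.SameCycle u v)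
    (x : ZMod p × Fin (k + 1) → V) (hx : Function.Injective x)
    (hnext : ∀ a (j : Fin k), pos (x (a, j.castSucc)) < pos (x (a, j.succ)) ∧
      ∀ q, pos (x q) ≤ pos (x (a, j.castSucc)) ∨ pos (x (a, j.succ)) ≤ pos (x q))
    (d : ℕ) : ∀ (σ : Equiv.Perm V) (f : Equiv.Perm (ZMod p × Fin (k + 1))), GoodPerm c x σ f →
    Nat.card (Quotient (Equiv.Perm.SameCycle.setoid σ)) = k + d →
    ∃ σ' f', GoodPerm c x σ' f' ∧ Nat.card (Quotient (Equiv.Perm.SameCycle.setoid σ')) = k := by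
  induction d with
  | zero => intro σ f h1 h2; exact ⟨σ, f, h1, h2⟩
  | succ d ih =>
    intro σ f h1 h2
    obtain ⟨a, i, j, hij⟩ := good_exists_merge hk c pos hpos hc1 hc2 x hnext σ f h1 (by omega)
    obtain ⟨f', hf'⟩ := good_swap c x hx σ f h1 a i j
    have := merge_count σ _ _ hij
    exact ih _ f' hf' (by omega)

theorem good_initial {V : Type} [Fintype V] [DecidableEq V] {p k : ℕ} [NeZero p]
    (c : Equiv.Perm V) (pos : V → ℕ) (hpos : Function.Injective pos)
    (hc1 : ∀ v w, pos v < pos w → pos (c v) = pos v + 1)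
    (x : ZMod p × Fin (k + 1) → V) (hx : Function.Injective x)
    (hnext : ∀ a (j : Fin k), pos (x (a, j.castSucc)) < pos (x (a, j.succ)) ∧
      ∀ q, pos (x q) ≤ pos (x (a, j.castSucc)) ∨ pos (x (a, j.succ)) ≤ pos (x q)) :
    ∃ σ f, GoodPerm c x σ f ∧ k ≤ Nat.card (Quotient (Equiv.Perm.SameCycle.setoid σ)) := by
  classical
  let f : Equiv.Perm (ZMod p × Fin (k + 1)) := Equiv.prodCongr (Equiv.addRight 1) (finRotate (k + 1)).symm
  have hf1 : ∀ q, (f q).1 = q.1 + 1 := fun q => rfl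
  have hf2 : ∀ a (j : Fin k), f (a, j.succ) = (a + 1, j.castSucc) := by
    intro a j
    refine Prod.ext rfl ?_
    show (finRotate (k + 1)).symm j.succ = j.castSucc
    rw [Equiv.symm_apply_eq, finRotate_apply, Fin.coeSucc_eq_succ]
  let σ : Equiv.Perm V := c * f.viaFintypeEmbedding ⟨x, hx⟩
  have hgood : GoodPerm c x σ f := by
    refine ⟨hf1, ?_, ?_⟩
    · intro q
      exact congrArg c (f.viaFintypeEmbedding_apply_image ⟨x, hx⟩ q)
    · intro v hv
      exact congrArg c (f.viaFintypeEmbedding_apply_notMem_range ⟨x, hx⟩ hv)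
  refine ⟨σ, f, hgood, ?_⟩
  let L : Fin k → V → Prop := fun j v => ∃ a, pos (x (a, j.castSucc)) < pos v ∧ pos v ≤ pos (x (a, j.succ))
  have hL : ∀ j v, L j v → L j (σ v) := by
    rintro j v ⟨a, h1, h2⟩
    rcases h2.lt_or_eq with h2 | h2
    · have h4 : v ∉ Set.range x := by
        rintro ⟨q, rfl⟩
        rcases (hnext a j).2 q with h5 | h5 <;> omega
      rw [hgood.2.2 v h4]
      have := hc1 _ _ h2
      exact ⟨a, by omega, by omega⟩
    · rw [hpos h2, hgood.2.1, hf2]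
      have h3 := (hnext (a + 1) j).1
      have := hc1 _ _ h3
      exact ⟨a + 1, by omega, by omega⟩
  have hL2 : ∀ j u v, L j u → σ.SameCycle u v → L j v := by
    intro j u v hu huv
    obtain ⟨i, -, hi⟩ := huv.exists_pow_eq'
    rw [← hi]
    clear hi
    induction i with
    | zero => exact hu
    | succ i ih =>
      rw [pow_succ', Equiv.Perm.mul_apply]
      exact hL j _ ih
  have hinj : Function.Injective (fun j : Fin k =>
      Quotient.mk (Equiv.Perm.SameCycle.setoid σ) (x (0, j.succ))) := by
    intro j j' hjj
    have h1 : σ.SameCycle (x (0, j.succ)) (x (0, j'.succ)) := Quotient.exact hjj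
    obtain ⟨a, h2, h3⟩ := hL2 j _ _ ⟨0, (hnext 0 j).1, le_rfl⟩ h1
    have h4 : pos (x (0, j'.succ)) = pos (x (a, j.succ)) := by
      rcases (hnext a j).2 (0, j'.succ) with h5 | h5 <;> omega
    have h5 := hx (hpos h4)
    have h6 : j'.succ = j.succ := (Prod.ext_iff.1 h5).2
    exact (Fin.succ_injective _ h6).symm
  have := Nat.card_le_card_of_injective _ hinj
  simpa using this

theorem core {V : Type} [Fintype V] [DecidableEq V] (G : SimpleGraph V) {p k : ℕ} [NeZero p] (hk : 1 ≤ k)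
    (c : Equiv.Perm V) (pos : V → ℕ) (hpos : Function.Injective pos)
    (hc1 : ∀ v w, pos v < pos w → pos (c v) = pos v + 1) (hc2 : ∀ u v, c.SameCycle u v)
    (hc3 : ∀ v, G.Adj v (c v))
    (x : ZMod p × Fin (k + 1) → V) (hx : Function.Injective x)
    (hnext : ∀ a (j : Fin k), pos (x (a, j.castSucc)) < pos (x (a, j.succ)) ∧
      ∀ q, pos (x q) ≤ pos (x (a, j.castSucc)) ∨ pos (x (a, j.succ)) ≤ pos (x q))
    (hR : ∀ a i j, G.Adj (x (a, i)) (c (x (a + 1, j))))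
    (hg1 : ∀ q q', x q' ≠ c (x q)) (hg2 : ∀ q q', x q' ≠ c (c (x q))) :
    ∃ σ : Equiv.Perm V, (∀ v, G.Adj v (σ v)) ∧ (∀ v, σ (σ v) ≠ v) ∧
      Nat.card (Quotient (Equiv.Perm.SameCycle.setoid σ)) = k := by
  obtain ⟨σ0, f0, h0, h0k⟩ := good_initial c pos hpos hc1 x hx hnext
  obtain ⟨d, hd⟩ := Nat.exists_eq_add_of_le h0k
  obtain ⟨σ, f, h, hcard⟩ := good_descend hk c pos hpos hc1 hc2 x hx hnext d σ0 f0 h0 hd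
  refine ⟨σ, ?_, ?_, hcard⟩
  · intro v
    by_cases hv : v ∈ Set.range x
    · obtain ⟨⟨a, i⟩, rfl⟩ := hv
      rw [h.2.1]
      have h1 := h.1 (a, i)
      have h2 : f (a, i) = (a + 1, (f (a, i)).2) := Prod.ext h1 rfl
      rw [h2]
      exact hR _ _ _
    · rw [h.2.2 v hv]; exact hc3 v
  · have hcc : ∀ v, c (c v) ≠ v := by
      intro v hv
      have hpw : ∀ m : ℕ, (c ^ m) v = v ∨ (c ^ m) v = c v := by
        intro m
        induction m with
        | zero => left; rfl
        | succ m ih =>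
          rw [pow_succ', Equiv.Perm.mul_apply]
          rcases ih with ih | ih
          · right; rw [ih]
          · left; rw [ih, hv]
      obtain ⟨m, -, hm⟩ := (hc2 v (x (0, 0))).exists_pow_eq'
      have h3 : x (0, 0) = c (c (x (0, 0))) := by
        rcases hpw m with h4 | h4
        · rw [hm] at h4; rw [h4, hv]
        · rw [hm] at h4; rw [h4, hv]
      exact hg2 _ _ h3
    intro v
    by_cases hv : v ∈ Set.range x
    · obtain ⟨q, rfl⟩ := hv
      have h1 : c (x (f q)) ∉ Set.range x := by
        rintro ⟨q', hq'⟩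
        exact hg1 _ _ hq'
      rw [h.2.1, h.2.2 _ h1]
      exact (hg2 _ _).symm
    · rw [h.2.2 v hv]
      by_cases hv2 : c v ∈ Set.range x
      · obtain ⟨q, hq⟩ := hv2
        rw [← hq, h.2.1]
        intro h3
        rw [← h3] at hq
        exact hg2 _ _ hq
      · rw [h.2.2 _ hv2]
        exact hcc v

theorem sample_eq {V : Type} [Fintype V] [DecidableEq V] {m : ℕ} (i j : Fin (m + 1)) (hij : i ≠ j) :
    (Finset.univ.filter (fun x : Fin (m + 1) → V => x i = x j)).card ≤ Fintype.card V ^ m := by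
  have h1 : Fintype.card ({l : Fin (m + 1) // l ≠ j} → V) = Fintype.card V ^ m := by
    rw [Fintype.card_fun, Fintype.card_subtype_compl, Fintype.card_subtype_eq, Fintype.card_fin]
    simp
  rw [← h1, ← Finset.card_univ]
  refine Finset.card_le_card_of_injOn (fun x l => x l.1) (by simp) ?_
  intro x hx y hy hxy
  simp only [Finset.coe_filter, Finset.mem_univ, true_and, Set.mem_ofPred_eq] at hx hy
  have h2 : ∀ l, l ≠ j → x l = y l := fun l hl => congrFun hxy ⟨l, hl⟩
  funext l
  by_cases hl : l = j
  · rw [hl, ← hx, ← hy]; exact h2 i hij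
  · exact h2 l hl

theorem sample_bad {V : Type} [Fintype V] [DecidableEq V] {m : ℕ} (i : Fin (m + 1)) (R : V → V → Prop)
    [DecidableRel R] (r : ℝ) (hr : ∀ v, ((Finset.univ.filter (fun w => ¬ R v w)).card : ℝ) ≤ r * Fintype.card V) :
    ((Finset.univ.filter (fun x : Fin (m + 1) → V => ∀ j, j ≠ i → ¬ R (x i) (x j))).card : ℝ) ≤
      Fintype.card V * (r * Fintype.card V) ^ m := by
  let T : V → Fin (m + 1) → Finset V := fun v j => if j = i then {v} else Finset.univ.filter (fun w => ¬ R v w)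
  have hsub : Finset.univ.filter (fun x : Fin (m + 1) → V => ∀ j, j ≠ i → ¬ R (x i) (x j)) ⊆
      Finset.univ.biUnion (fun v => Fintype.piFinset (T v)) := by
    intro x hx
    simp only [Finset.mem_filter, Finset.mem_univ, true_and] at hx
    rw [Finset.mem_biUnion]
    refine ⟨x i, Finset.mem_univ _, ?_⟩
    rw [Fintype.mem_piFinset]
    intro j
    by_cases hj : j = i
    · simp [T, hj]
    · simp [T, hj, hx j hj]
  have h1 := (Finset.card_le_card hsub).trans Finset.card_biUnion_le
  have h2 : ∀ v, ((Fintype.piFinset (T v)).card : ℝ) ≤ (r * Fintype.card V) ^ m := by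
    intro v
    rw [Fintype.card_piFinset, ← Finset.mul_prod_erase _ _ (Finset.mem_univ i)]
    have h3 : ∏ j ∈ Finset.univ.erase i, (T v j).card = (Finset.univ.filter (fun w => ¬ R v w)).card ^ m := by
      rw [Finset.prod_congr rfl (g := fun _ => (Finset.univ.filter (fun w => ¬ R v w)).card)]
      · rw [Finset.prod_const, Finset.card_erase_of_mem (Finset.mem_univ _)]; simp
      · intro j hj
        simp [T, Finset.ne_of_mem_erase hj]
    rw [h3]
    simp only [T, if_true, Finset.card_singleton, one_mul]
    push_cast
    gcongr
    exact hr v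
  calc _ ≤ ((∑ v, (Fintype.piFinset (T v)).card : ℕ) : ℝ) := by exact_mod_cast h1
    _ = ∑ v, ((Fintype.piFinset (T v)).card : ℝ) := by push_cast; rfl
    _ ≤ ∑ v : V, (r * Fintype.card V) ^ m := Finset.sum_le_sum fun v _ => h2 v
    _ = _ := by simp

theorem sample (ε : ℝ) (hε : 0 < ε) (hε1 : ε < 1) : ∃ m N : ℕ, ∀ (V : Type) [Fintype V] [DecidableEq V]
    (R : V → V → Prop) [DecidableRel R], N ≤ Fintype.card V →
    (∀ v, ε * Fintype.card V ≤ ((Finset.univ.filter (fun w => R v w)).card : ℝ)) →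
    ∃ S : Finset (Fin (m + 1) → V), 1 / 2 * (Fintype.card V : ℝ) ^ (m + 1) ≤ S.card ∧
      ∀ x ∈ S, Function.Injective x ∧ ∀ i, ∃ j, j ≠ i ∧ R (x i) (x j) := by
  have ht1 := tendsto_self_mul_const_pow_of_lt_one (r := 1 - ε) (by linarith) (by linarith)
  have ht2 := tendsto_pow_atTop_nhds_zero_of_lt_one (r := 1 - ε) (by linarith) (by linarith)
  obtain ⟨m, hm1, hm2⟩ := ((ht1.eventually_lt_const (show (0 : ℝ) < 1 / 8 by norm_num)).and
    (ht2.eventually_lt_const (show (0 : ℝ) < 1 / 8 by norm_num))).exists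
  refine ⟨m, 4 * (m + 1) ^ 2 + 1, fun V _ _ R _ hN hR => ?_⟩
  set n := Fintype.card V with hn
  let S : Finset (Fin (m + 1) → V) :=
    Finset.univ.filter (fun x => Function.Injective x ∧ ∀ i, ∃ j, j ≠ i ∧ R (x i) (x j))
  refine ⟨S, ?_, fun x hx => by simpa [S] using hx⟩
  let E : Fin (m + 1) → Fin (m + 1) → Finset (Fin (m + 1) → V) := fun i j =>
    if i = j then ∅ else Finset.univ.filter (fun x => x i = x j)
  let B : Fin (m + 1) → Finset (Fin (m + 1) → V) := fun i =>
    Finset.univ.filter (fun x => ∀ j, j ≠ i → ¬ R (x i) (x j))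
  have hcover : (Finset.univ : Finset (Fin (m + 1) → V)) ⊆
      S ∪ ((Finset.univ.biUnion fun i => Finset.univ.biUnion fun j => E i j) ∪ Finset.univ.biUnion B) := by
    intro x _
    by_cases h1 : Function.Injective x
    · by_cases h2 : ∀ i, ∃ j, j ≠ i ∧ R (x i) (x j)
      · exact Finset.mem_union_left _ (by simp only [S, Finset.mem_filter, Finset.mem_univ, true_and]; exact ⟨h1, h2⟩)
      · push Not at h2
        obtain ⟨i, hi⟩ := h2
        refine Finset.mem_union_right _ (Finset.mem_union_right _ ?_)
        rw [Finset.mem_biUnion]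
        exact ⟨i, Finset.mem_univ _, by simp only [B, Finset.mem_filter, Finset.mem_univ, true_and]; exact hi⟩
    · simp only [Function.Injective] at h1
      push Not at h1
      obtain ⟨i, j, h3, h4⟩ := h1
      refine Finset.mem_union_right _ (Finset.mem_union_left _ ?_)
      simp only [Finset.mem_biUnion]
      exact ⟨i, Finset.mem_univ _, j, Finset.mem_univ _, by simp [E, h4, h3]⟩
  have hE : ∀ i j, (E i j).card ≤ n ^ m := by
    intro i j
    by_cases h : i = j
    · simp [E, h]
    · simp only [E, h, if_false]; exact sample_eq i j h
  have hE2 : (Finset.univ.biUnion fun i => Finset.univ.biUnion fun j => E i j).card ≤ (m + 1) ^ 2 * n ^ m := by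
    refine Finset.card_biUnion_le.trans ?_
    calc _ ≤ ∑ i : Fin (m + 1), ∑ j : Fin (m + 1), n ^ m :=
          Finset.sum_le_sum fun i _ => Finset.card_biUnion_le.trans (Finset.sum_le_sum fun j _ => hE i j)
      _ = _ := by simp; ring
  have hB : ∀ i, ((B i).card : ℝ) ≤ n * ((1 - ε) * n) ^ m := by
    intro i
    refine sample_bad i R (1 - ε) fun v => ?_
    have h1 := Finset.card_filter_add_card_filter_not (s := (Finset.univ : Finset V)) (fun w => R v w)
    rw [Finset.card_univ] at h1
    have h2 : ((Finset.univ.filter (fun w => R v w)).card : ℝ) + (Finset.univ.filter (fun w => ¬ R v w)).card = n := by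
      exact_mod_cast h1
    have := hR v
    rw [← hn]
    linarith
  have hB2 : ((Finset.univ.biUnion B).card : ℝ) ≤ (m + 1) * (n * ((1 - ε) * n) ^ m) := by
    calc ((Finset.univ.biUnion B).card : ℝ) ≤ ((∑ i, (B i).card : ℕ) : ℝ) := by exact_mod_cast Finset.card_biUnion_le
      _ = ∑ i, ((B i).card : ℝ) := by push_cast; rfl
      _ ≤ ∑ i : Fin (m + 1), (n * ((1 - ε) * n) ^ m : ℝ) := Finset.sum_le_sum fun i _ => hB i
      _ = _ := by simp
  have htot := (Finset.card_le_card hcover).trans ((Finset.card_union_le _ _).trans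
    (Nat.add_le_add_left (Finset.card_union_le _ _) _))
  rw [Finset.card_univ, Fintype.card_fun, Fintype.card_fin, ← hn] at htot
  have htot' : (n : ℝ) ^ (m + 1) ≤ S.card + ((Finset.univ.biUnion fun i => Finset.univ.biUnion fun j => E i j).card
      + (Finset.univ.biUnion B).card) := by exact_mod_cast htot
  have hE3 : ((Finset.univ.biUnion fun i => Finset.univ.biUnion fun j => E i j).card : ℝ) ≤ (m + 1) ^ 2 * n ^ m := by
    exact_mod_cast hE2
  have hn4 : (4 * (m + 1) ^ 2 : ℝ) ≤ n := by
    have : 4 * (m + 1) ^ 2 ≤ n := by omega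
    exact_mod_cast this
  have hp : (0 : ℝ) ≤ (n : ℝ) ^ m := by positivity
  have h5 : ((m : ℝ) + 1) ^ 2 * n ^ m ≤ 1 / 4 * (n : ℝ) ^ (m + 1) := by
    rw [pow_succ (n : ℝ) m]
    nlinarith
  have h6 : ((m : ℝ) + 1) * (n * ((1 - ε) * n) ^ m) ≤ 1 / 4 * (n : ℝ) ^ (m + 1) := by
    have : ((m : ℝ) + 1) * (n * ((1 - ε) * n) ^ m) = (m * (1 - ε) ^ m + (1 - ε) ^ m) * (n : ℝ) ^ (m + 1) := by
      rw [mul_pow]; ring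
    rw [this]
    gcongr
    linarith
  linarith

theorem sorted_enum {V : Type} (pos : V → ℕ) (hpos : Function.Injective pos) (t : ℕ)
    (X : Finset V) (hX : X.card = t) : ∃ y : Fin t → V, (∀ j, y j ∈ X) ∧ StrictMono (fun j => pos (y j)) := by
  classical
  have hc : (X.image pos).card = t := by rw [Finset.card_image_of_injective _ hpos, hX]
  have h : ∀ j, ∃ v, v ∈ X ∧ pos v = (X.image pos).orderEmbOfFin hc j := by
    intro j
    have := Finset.orderEmbOfFin_mem (X.image pos) hc j
    rw [Finset.mem_image] at this
    exact this
  choose y hy1 hy2 using h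
  refine ⟨y, hy1, ?_⟩
  intro a b hab
  simp only [hy2]
  exact ((X.image pos).orderEmbOfFin hc).strictMono hab

/-- Blow-up of a cycle in a dense digraph, with blocks separated in the order given by `pos`. -/
theorem blowup (ε : ℝ) (hε : 0 < ε) (hε1 : ε < 1) (t : ℕ) (ht : 0 < t) : ∃ N : ℕ, ∀ (V : Type) [Fintype V]
    [DecidableEq V] (R : V → V → Prop) [DecidableRel R] (pos : V → ℕ), Function.Injective pos →
    N ≤ Fintype.card V →
    (∀ v, ε * Fintype.card V ≤ ((Finset.univ.filter (fun w => R v w)).card : ℝ)) →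
    ∃ (p : ℕ) (_ : NeZero p) (y : ZMod p → Fin t → V), (∀ a, StrictMono (fun j => pos (y a j))) ∧
      (∀ a i j, R (y a i) (y (a + 1) j)) ∧
      ∀ a b, a ≠ b → (∀ i j, pos (y a i) < pos (y b j)) ∨ (∀ i j, pos (y b j) < pos (y a i)) := by
  obtain ⟨m, N1, hN1⟩ := sample ε hε hε1
  let P := (Fin (m + 1) → Fin (m + 1)) × (Fin (m + 1) → Fin (m + 1) → Bool)
  have hP : (0 : ℝ) < Fintype.card P := by
    have : 0 < Fintype.card P := Fintype.card_pos
    exact_mod_cast this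
  obtain ⟨N2, hN2⟩ := box (m + 1) t (1 / 2 / Fintype.card P) (by positivity)
  refine ⟨max N1 N2, fun V _ _ R _ pos hpos hN hR => ?_⟩
  obtain ⟨S, hS1, hS2⟩ := hN1 V R (le_trans (le_max_left _ _) hN) hR
  choose! hinj g hg1 hg2 using hS2
  let pat : (Fin (m + 1) → V) → P := fun x => (g x, fun i j => decide (pos (x i) < pos (x j)))
  obtain ⟨⟨g0, o⟩, -, hpig⟩ := Finset.exists_le_card_fiber_of_nsmul_le_card_of_maps_to (s := S)
    (t := (Finset.univ : Finset P)) (f := pat)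
    (b := 1 / 2 / Fintype.card P * (Fintype.card V : ℝ) ^ (m + 1)) (by simp) Finset.univ_nonempty (by
      rw [Finset.card_univ, nsmul_eq_mul]
      refine le_trans (le_of_eq ?_) hS1
      field_simp)
  obtain ⟨X, hX1, hX2⟩ := hN2 V _ (le_trans (le_max_right _ _) hN) hpig
  have hne : ∀ i, ∃ v, v ∈ X i := fun i => Finset.card_pos.1 (by rw [hX1]; exact ht)
  choose x0 hx0 using hne
  have hpair : ∀ i j, i ≠ j → ∀ u ∈ X i, ∀ w ∈ X j, ∃ x, x ∈ S ∧ g x = g0 ∧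
      (∀ i j, decide (pos (x i) < pos (x j)) = o i j) ∧ x i = u ∧ x j = w := by
    intro i j hij u hu w hw
    have h1 := hX2 (Function.update (Function.update x0 i u) j w) (by
      intro l
      by_cases h1 : l = j
      · subst h1; simpa using hw
      by_cases h2 : l = i
      · subst h2; simpa [h1] using hu
      simpa [h1, h2] using hx0 l)
    rw [Finset.mem_filter] at h1
    refine ⟨_, h1.1, (Prod.ext_iff.1 h1.2).1, fun i j => congrFun (congrFun (Prod.ext_iff.1 h1.2).2 i) j, ?_, ?_⟩
    · simp [hij]
    · simp
  have hg0 : ∀ i, g0 i ≠ i := by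
    have h1 := hX2 x0 hx0
    rw [Finset.mem_filter] at h1
    intro i
    have h2 : g x0 = g0 := (Prod.ext_iff.1 h1.2).1
    rw [← h2]
    exact hg1 _ h1.1 i
  have hRX : ∀ i, ∀ u ∈ X i, ∀ w ∈ X (g0 i), R u w := by
    intro i u hu w hw
    obtain ⟨x, h1, h2, -, rfl, rfl⟩ := hpair i (g0 i) (hg0 i).symm u hu w hw
    rw [← h2]
    exact hg2 x h1 i
  have hsep : ∀ i j, i ≠ j → (∀ u ∈ X i, ∀ w ∈ X j, pos u < pos w) ∨ (∀ u ∈ X i, ∀ w ∈ X j, pos w < pos u) := by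
    intro i j hij
    cases ho : o i j
    · right
      intro u hu w hw
      obtain ⟨x, h1, h2, h3, rfl, rfl⟩ := hpair i j hij u hu w hw
      have h4 := h3 i j
      rw [ho, decide_eq_false_iff_not, not_lt] at h4
      refine lt_of_le_of_ne h4 fun h5 => hij (hinj x h1 (hpos h5)).symm
    · left
      intro u hu w hw
      obtain ⟨x, h1, h2, h3, rfl, rfl⟩ := hpair i j hij u hu w hw
      have h4 := h3 i j
      rwa [ho, decide_eq_true_iff] at h4
  have hen : ∀ i, ∃ y : Fin t → V, (∀ j, y j ∈ X i) ∧ StrictMono (fun j => pos (y j)) :=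
    fun i => sorted_enum pos hpos t (X i) (hX1 i)
  choose Y hY1 hY2 using hen
  -- a cycle of `g0`
  obtain ⟨z, hz⟩ : ∃ z, 0 < Function.minimalPeriod g0 z := by
    obtain ⟨a, b, hab, he⟩ := Finite.exists_ne_map_eq_of_infinite (fun l : ℕ => g0^[l] 0)
    wlog hlt : a < b generalizing a b
    · exact this b a hab.symm he.symm (by omega)
    refine ⟨g0^[a] 0, Function.IsPeriodicPt.minimalPeriod_pos (n := b - a) (by omega) ?_⟩
    show g0^[b - a] (g0^[a] 0) = g0^[a] 0
    rw [← Function.iterate_add_apply, Nat.sub_add_cancel hlt.le]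
    exact he.symm
  set p := Function.minimalPeriod g0 z with hp
  have : NeZero p := ⟨hz.ne'⟩
  have hsucc : ∀ a : ZMod p, g0^[(a + 1).val] z = g0 (g0^[a.val] z) := by
    intro a
    rw [← Function.iterate_succ_apply' g0, ZMod.val_add, ZMod.val_one_eq_one_mod, Nat.add_mod_mod]
    exact Function.iterate_mod_minimalPeriod_eq
  have hinjp : ∀ a b : ZMod p, g0^[a.val] z = g0^[b.val] z → a = b := by
    intro a b h
    apply ZMod.val_injective
    exact Function.iterate_injOn_Iio_minimalPeriod (Set.mem_Iio.2 (ZMod.val_lt a)) (Set.mem_Iio.2 (ZMod.val_lt b)) h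
  refine ⟨p, this, fun a => Y (g0^[a.val] z), fun a => hY2 _, ?_, ?_⟩
  · intro a i j
    refine hRX _ _ (hY1 _ _) _ ?_
    rw [← hsucc]
    exact hY1 _ _
  · intro a b hab
    rcases hsep _ _ (fun h => hab (hinjp a b h)) with h | h
    · exact Or.inl fun i j => h _ (hY1 _ _) _ (hY1 _ _)
    · exact Or.inr fun i j => h _ (hY1 _ _) _ (hY1 _ _)

/-- **Main theorem.**  For every positive integer `k` and every `ε > 0` there exists
`N = N(k, ε)` such that every Hamiltonian graph `G` on `n ≥ N` vertices with minimum
degree `δ(G) ≥ εn` contains a 2-factor consisting of exactly `k` vertex-disjoint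
cycles, i.e. a spanning 2-regular subgraph with exactly `k` connected components. -/
theorem stmt_12 (k : ℕ) (hk : 1 ≤ k) (ε : ℝ) (hε : 0 < ε) :
    ∃ N : ℕ, ∀ (V : Type) [Fintype V] [DecidableEq V] (G : SimpleGraph V),
      N ≤ Fintype.card V →
      G.IsHamiltonian →
      (∀ v : V, ε * Fintype.card V ≤ ({u | G.Adj v u}.ncard : ℝ)) →
      ∃ F : SimpleGraph V, F ≤ G ∧ (∀ v : V, {u | F.Adj v u}.ncard = 2) ∧
        Nat.card F.ConnectedComponent = k := by
  classical
  obtain ⟨N, hN⟩ := blowup (min ε (1 / 2)) (by positivity) (lt_of_le_of_lt (min_le_right _ _) (by norm_num))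
    (3 * (k + 1)) (by omega)
  refine ⟨max N 2, fun V _ _ G hcard hH hdeg => ?_⟩
  obtain ⟨c, pos, hpos, hc1, hc2, hc3⟩ := ham_perm G (le_trans (le_max_right _ _) hcard) hH
  obtain ⟨p, hp, y, hy1, hy2, hy3⟩ := hN V (fun v w => G.Adj v (c w)) pos hpos (le_trans (le_max_left _ _) hcard) (by
    intro v
    have h1 : (Finset.univ.filter (fun w => G.Adj v (c w))).card = {u | G.Adj v u}.ncard := by
      have h2 : ((Finset.univ.filter (fun w => G.Adj v (c w))).map c.toEmbedding : Set V) = {u | G.Adj v u} := by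
        ext u
        simp only [Finset.coe_map, Set.mem_image, Finset.coe_filter, Finset.mem_univ, true_and, Set.mem_ofPred_eq]
        constructor
        · rintro ⟨w, h3, rfl⟩; exact h3
        · intro h3; exact ⟨c.symm u, by simpa using h3, by simp⟩
      rw [← h2, Set.ncard_coe_finset, Finset.card_map]
    rw [h1]
    refine le_trans ?_ (hdeg v)
    gcongr
    exact min_le_left _ _)
  let idx : Fin (k + 1) → Fin (3 * (k + 1)) := fun j => ⟨3 * j.val, by omega⟩
  let x : ZMod p × Fin (k + 1) → V := fun q => y q.1 (idx q.2)
  -- the order facts we need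
  have gap : ∀ q q', pos (x q) < pos (x q') → pos (x q) + 3 ≤ pos (x q') ∧
      ∃ w, pos (x q) + 2 ≤ pos w := by
    rintro ⟨a, i⟩ ⟨b, j⟩ h
    have e1 : pos (y a (idx i)) < pos (y a ⟨3 * i.val + 1, by omega⟩) := hy1 a (by simp [idx, Fin.lt_def])
    have e2 : pos (y a ⟨3 * i.val + 1, by omega⟩) < pos (y a ⟨3 * i.val + 2, by omega⟩) :=
      hy1 a (by simp [Fin.lt_def])
    have e3 : pos (y a ⟨3 * i.val + 2, by omega⟩) < pos (y b (idx j)) := by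
      by_cases hab : a = b
      · subst hab
        apply hy1 a
        have : idx i < idx j := (hy1 a).lt_iff_lt.1 h
        simp only [idx, Fin.lt_def] at this ⊢
        omega
      · rcases hy3 a b hab with h1 | h1
        · exact h1 _ _
        · exact absurd (h1 (idx i) (idx j)) (by simp only [x] at h; omega)
    refine ⟨?_, y a ⟨3 * i.val + 2, by omega⟩, ?_⟩
    · simp only [x]; omega
    · simp only [x]; omega
  have hbig : ∀ q, ∃ w, pos (x q) + 2 ≤ pos w := by
    rintro ⟨a, i⟩
    have e1 : pos (y a (idx i)) < pos (y a ⟨3 * i.val + 1, by omega⟩) := hy1 a (by simp [idx, Fin.lt_def])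
    have e2 : pos (y a ⟨3 * i.val + 1, by omega⟩) < pos (y a ⟨3 * i.val + 2, by omega⟩) :=
      hy1 a (by simp [Fin.lt_def])
    exact ⟨y a ⟨3 * i.val + 2, by omega⟩, by simp only [x]; omega⟩
  have hs1 : ∀ q, pos (c (x q)) = pos (x q) + 1 := by
    intro q
    obtain ⟨w, hw⟩ := hbig q
    exact hc1 _ w (by omega)
  have hs2 : ∀ q, pos (c (c (x q))) = pos (x q) + 2 := by
    intro q
    obtain ⟨w, hw⟩ := hbig q
    have := hs1 q
    rw [hc1 _ w (by omega)]
    omega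
  have hx : Function.Injective x := by
    rintro ⟨a, i⟩ ⟨b, j⟩ h
    by_cases hab : a = b
    · subst hab
      have h1 : pos (y a (idx i)) = pos (y a (idx j)) := congrArg pos h
      have h2 : idx i = idx j := (hy1 a).injective h1
      simp only [idx, Fin.mk.injEq] at h2
      have : i = j := Fin.ext (by omega)
      rw [this]
    · have h1 : pos (y a (idx i)) = pos (y b (idx j)) := congrArg pos h
      rcases hy3 a b hab with h2 | h2
      · have := h2 (idx i) (idx j); omega
      · have := h2 (idx i) (idx j); omega
  have hnext : ∀ a (j : Fin k), pos (x (a, j.castSucc)) < pos (x (a, j.succ)) ∧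
      ∀ q, pos (x q) ≤ pos (x (a, j.castSucc)) ∨ pos (x (a, j.succ)) ≤ pos (x q) := by
    intro a j
    refine ⟨hy1 a (by simp [idx, Fin.lt_def]), ?_⟩
    rintro ⟨b, i⟩
    by_cases hab : a = b
    · subst hab
      simp only [x]
      rcases le_or_gt i.val j.val with h | h
      · left
        apply (hy1 a).monotone
        simp only [idx, Fin.le_def, Fin.val_castSucc]; omega
      · right
        apply (hy1 a).monotone
        simp only [idx, Fin.le_def, Fin.val_succ]; omega
    · rcases hy3 a b hab with h | h
      · right; exact (h _ _).le
      · left; exact (h _ _).le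
  obtain ⟨σ, h1, h2, h3⟩ := core G hk c pos hpos hc1 hc2 hc3 x hx hnext (fun a i j => hy2 a _ _)
    (by
      intro q q' h
      have h4 := hs1 q
      rw [← h] at h4
      have := (gap q q' (by omega)).1
      omega)
    (by
      intro q q' h
      have h4 := hs2 q
      rw [← h] at h4
      have := (gap q q' (by omega)).1
      omega)
  obtain ⟨F, hF1, hF2, hF3⟩ := factor_of_perm G σ h1 h2
  exact ⟨F, hF1, hF2, hF3.trans h3⟩
end
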